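/- Let F : H → H be Lipschitz continuous. Then the control system y(t) = S(t)x + ∫₀ᵗ K(t−s)F(y(s))ds + ∫₀ᵗ S(t−s)u(s)ds is approximately controllable: for every ε > 0, T > 0 and x, z ∈ H there exist a strongly measurable u : [0,T] → H with ∫₀ᵀ ‖u(t)‖² dt < ∞ and a continuous y : [0,T] → H satisfying the above integral equation for all t ∈ [0,T], such that ‖y(T) − z‖ ≤ ε. -/

import Mathlib

open Real MeasureTheory

noncomputable section

/-- `H = ℓ²(ℤ; ℝ)`, modelling `2π`-periodic `L²` functions via the trigonometric
orthonormal basis. -/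
abbrev H : Type := lp (fun _ : ℤ => ℝ) 2

/-!
The feedback `u(s) = S(s)w - K(δ)F(y(s))` does two things. Since `S(t-s)K(δ) = K(t-s+δ)`, its
second term replaces the kernel `K(r)` of the nonlinearity by `K(r) - K(r+δ)`, whose `L¹` norm on
`[0,T]` tends to `0` with `δ` because translations are continuous in `L¹`. So for small `δ` the
closed-loop equation is a contraction and its solution stays close to the trajectory
`S(t)x + ∫₀ᵗ S(t-s)S(s)w ds = S(t)(x + t w)` of the linear system. The latter ends at `S(T)p` when
`w = (p - x)/T`, and `S(T)` has dense range.
-/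

section FixedPoint

variable {X Y : Type*} [NormedAddCommGroup X] [NormedSpace ℝ X] [CompleteSpace X]
  [NormedAddCommGroup Y] [NormedSpace ℝ Y]

lemma exists_eq_add_clm_apply (A : Y →L[ℝ] X) {N : X → Y} {L : NNReal} (hN : LipschitzWith L N)
    (hA : ‖A‖ * L ≤ 1 / 2) (g : X) : ∃ y, y = g + A (N y) ∧ ‖y - g‖ ≤ 2 * (‖A‖ * ‖N g‖) := by
  have hcontr : ContractingWith (1 / 2) fun y => g + A (N y) := by
    refine ⟨by norm_num, LipschitzWith.of_dist_le_mul fun y₁ y₂ => ?_⟩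
    rw [dist_add_left]
    calc dist (A (N y₁)) (A (N y₂)) ≤ ‖A‖ * dist (N y₁) (N y₂) := A.lipschitz.dist_le_mul _ _
      _ ≤ ‖A‖ * (L * dist y₁ y₂) := by gcongr; exact hN.dist_le_mul _ _
      _ = ‖A‖ * L * dist y₁ y₂ := by ring
      _ ≤ _ := by gcongr; simpa using hA
  obtain ⟨y, hy⟩ : ∃ y, y = g + A (N y) := ⟨_, hcontr.fixedPoint_isFixedPt.symm⟩
  refine ⟨y, hy, ?_⟩
  have hNy : ‖N y‖ ≤ ‖N g‖ + L * ‖y - g‖ := by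
    calc ‖N y‖ ≤ ‖N g‖ + ‖N y - N g‖ := norm_le_norm_add_norm_sub' _ _
      _ ≤ _ := by gcongr; simpa only [dist_eq_norm] using hN.dist_le_mul y g
  have hself : ‖y - g‖ ≤ ‖A‖ * ‖N g‖ + 1 / 2 * ‖y - g‖ := by
    calc ‖y - g‖ = ‖A (N y)‖ := by conv_lhs => rw [hy, add_sub_cancel_left]
      _ ≤ ‖A‖ * (‖N g‖ + L * ‖y - g‖) := A.le_opNorm_of_le hNy
      _ = ‖A‖ * ‖N g‖ + ‖A‖ * L * ‖y - g‖ := by ring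
      _ ≤ _ := by gcongr
  linarith

end FixedPoint

section Translation

open Set Filter Topology

lemma tendsto_integral_norm_translate_sub {G V : Type*} [AddGroup G] [TopologicalSpace G]
    [IsTopologicalAddGroup G] [MeasurableSpace G] [BorelSpace G] [NormedAddCommGroup V]
    {μ : Measure G} [IsLocallyFiniteMeasure μ] [μ.InnerRegularCompactLTTop]
    [μ.IsAddLeftInvariant] {f : G → V} (hf : Integrable f μ) :
    Tendsto (fun c => ∫ x, ‖f (c + x) - f x‖ ∂μ) (𝓝 0) (𝓝 0) := by
  have : Fact ((1 : ENNReal) ≠ ⊤) := ⟨ENNReal.one_ne_top⟩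
  have hLp : MemLp f 1 μ := memLp_one_iff_integrable.2 hf
  have htrans : ∀ c, ∫ x, ‖f (c + x) - f x‖ ∂μ = ‖(DomAddAct.mk c +ᵥ hLp.toLp f) - hLp.toLp f‖ := by
    intro c
    rw [DomAddAct.mk_vadd_toLp, ← MemLp.toLp_sub]
    exact (L1.norm_of_fun_eq_integral_norm ((hf.comp_add_left c).sub hf)).symm
  have hcont : Continuous fun c : G => ‖(DomAddAct.mk c +ᵥ hLp.toLp f) - hLp.toLp f‖ :=
    ((DomAddAct.continuous_mk.vadd continuous_const).sub continuous_const).norm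
  simpa only [htrans, DomAddAct.mk_zero, zero_vadd, sub_self, norm_zero] using hcont.tendsto 0

lemma tendsto_intervalIntegral_norm_sub_translate {V : Type*} [NormedAddCommGroup V] {f : ℝ → V}
    {a b c : ℝ} (hab : a ≤ b) (hbc : b < c) (hf : IntervalIntegrable f volume a c) :
    Tendsto (fun δ => ∫ r in a..b, ‖f r - f (r + δ)‖) (𝓝[>] 0) (𝓝 0) := by
  set k : ℝ → V := (Ioc a c).indicator f
  have hk : Integrable k :=
    (integrable_indicator_iff measurableSet_Ioc).2
      ((intervalIntegrable_iff_integrableOn_Ioc_of_le (hab.trans hbc.le)).1 hf)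
  refine squeeze_zero' (Eventually.of_forall fun δ => intervalIntegral.integral_nonneg hab
    fun _ _ => norm_nonneg _) ?_
    ((tendsto_integral_norm_translate_sub hk).mono_left nhdsWithin_le_nhds)
  filter_upwards [Ioo_mem_nhdsGT (sub_pos.2 hbc)] with δ hδ
  have hf_eq_k : ∀ r ∈ Ioc a b, ‖f r - f (r + δ)‖ = ‖k (δ + r) - k r‖ := by
    intro r hr
    have hmem : r ∈ Ioc a c := ⟨hr.1, hr.2.trans hbc.le⟩
    have hmem' : δ + r ∈ Ioc a c := ⟨by linarith [hr.1, hδ.1], by linarith [hr.2, hδ.2]⟩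
    simp only [k, indicator_of_mem hmem, indicator_of_mem hmem', norm_sub_rev (f r), add_comm r]
  rw [intervalIntegral.integral_of_le hab, setIntegral_congr_fun measurableSet_Ioc hf_eq_k]
  exact setIntegral_le_integral ((hk.comp_add_left δ).sub hk).norm
    (Eventually.of_forall fun _ => norm_nonneg _)

lemma intervalIntegrable_translate {V : Type*} [NormedAddCommGroup V] {f : ℝ → V}
    (hf : ∀ t, 0 ≤ t → IntervalIntegrable f volume 0 t) {δ t : ℝ} (hδ : 0 ≤ δ) (ht : 0 ≤ t) :
    IntervalIntegrable (fun r => f (r + δ)) volume 0 t := by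
  have hf' : IntervalIntegrable f volume δ (t + δ) := (hf δ hδ).symm.trans (hf _ (add_nonneg ht hδ))
  simpa only [sub_self, add_sub_cancel_right] using hf'.comp_add_right δ

lemma exists_pos_integral_norm_sub_translate_mul_le {V : Type*} [NormedAddCommGroup V]
    {f : ℝ → V} {a b c : ℝ} (hab : a ≤ b) (hbc : b < c) (hf : IntervalIntegrable f volume a c)
    (L M : ℝ) {η θ : ℝ} (hη : 0 < η) (hθ : 0 < θ) :
    ∃ δ > 0, (∫ r in a..b, ‖f r - f (r + δ)‖) * L ≤ η ∧
      (∫ r in a..b, ‖f r - f (r + δ)‖) * M ≤ θ := by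
  have hlim := tendsto_intervalIntegral_norm_sub_translate hab hbc hf
  have hL := (hlim.mul_const L).eventually_le_const (u := η) (by rwa [zero_mul])
  have hM := (hlim.mul_const M).eventually_le_const (u := θ) (by rwa [zero_mul])
  obtain ⟨δ, hδ, hδpos⟩ := ((hL.and hM).and self_mem_nhdsWithin).exists
  exact ⟨δ, hδpos, hδ⟩

end Translation

section Convolution

open Set Filter Topology
open scoped BoundedContinuousFunction

variable {V W : Type*} [NormedAddCommGroup V] [NormedSpace ℝ V] [NormedAddCommGroup W]
  [NormedSpace ℝ W] {E : ℝ → V →L[ℝ] W}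

lemma integrable_clm_apply_bcf {μ : Measure ℝ} (hE : Integrable E μ) (φ : ℝ →ᵇ V) :
    Integrable (fun s => E s (φ s)) μ :=
  (ContinuousLinearMap.apply ℝ W).integrable_of_bilin_of_bdd_left ‖φ‖
    φ.continuous.aestronglyMeasurable (Eventually.of_forall φ.norm_coe_le_norm) hE

lemma norm_setIntegral_clm_apply_le {μ : Measure ℝ} (hE : Integrable E μ) (φ : ℝ →ᵇ V)
    (A : Set ℝ) : ‖∫ s in A, E s (φ s) ∂μ‖ ≤ (∫ s, ‖E s‖ ∂μ) * ‖φ‖ := by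
  calc ‖∫ s in A, E s (φ s) ∂μ‖ ≤ ∫ s in A, ‖E s‖ * ‖φ‖ ∂μ :=
        norm_integral_le_of_norm_le (hE.norm.mul_const _).restrict
          (Eventually.of_forall fun s => (E s).le_opNorm_of_le (φ.norm_coe_le_norm s))
    _ = (∫ s in A, ‖E s‖ ∂μ) * ‖φ‖ := integral_mul_const _ _
    _ ≤ _ := mul_le_mul_of_nonneg_right (setIntegral_le_integral hE.norm
        (Eventually.of_forall fun _ => norm_nonneg _)) (norm_nonneg _)

lemma norm_setIntegral_convolution_le (hE : Integrable E) (φ : ℝ →ᵇ V) (A : Set ℝ) (t : ℝ) :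
    ‖∫ s in A, E (t - s) (φ s)‖ ≤ (∫ r, ‖E r‖) * ‖φ‖ := by
  rw [← integral_sub_left_eq_self (fun r => ‖E r‖) volume t]
  exact norm_setIntegral_clm_apply_le (hE.comp_sub_left t) φ A

lemma continuous_setIntegral_convolution (hE : Integrable E) (φ : ℝ →ᵇ V) (A : Set ℝ) :
    Continuous fun t => ∫ s in A, E (t - s) (φ s) := by
  refine continuous_iff_continuousAt.2 fun t => ?_
  have hshift : Tendsto (fun t' => (∫ s, ‖E (t' - t + s) - E s‖) * ‖φ‖) (𝓝 t) (𝓝 0) := by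
    have hsub : Tendsto (fun t' => t' - t) (𝓝 t) (𝓝 0) :=
      (continuous_id.sub continuous_const).tendsto' _ _ (sub_self t)
    simpa only [zero_mul, Function.comp_def] using
      ((tendsto_integral_norm_translate_sub hE).comp hsub).mul_const ‖φ‖
  refine tendsto_iff_norm_sub_tendsto_zero.2 (squeeze_zero (fun _ => norm_nonneg _) ?_ hshift)
  intro t'
  have hint : ∀ r, Integrable fun s => E (r - s) := fun r => hE.comp_sub_left r
  have hdiff : (∫ s in A, E (t' - s) (φ s)) - ∫ s in A, E (t - s) (φ s) =
      ∫ s in A, (E (t' - s) - E (t - s)) (φ s) := by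
    simp only [sub_apply]
    exact (integral_sub (integrable_clm_apply_bcf (hint t') φ).restrict
      (integrable_clm_apply_bcf (hint t) φ).restrict).symm
  have hnorm : ∫ s, ‖E (t' - t + s) - E s‖ = ∫ s, ‖E (t' - s) - E (t - s)‖ := by
    rw [← integral_sub_left_eq_self _ _ t]
    simp only [sub_add_sub_cancel]
  rw [hdiff, hnorm]
  exact norm_setIntegral_clm_apply_le ((hint t').sub (hint t)) φ A

/-- The operator `φ ↦ (t ↦ ∫₀^∞ E(t-s) φ(s) ds)` on bounded continuous functions. For a kernel `E`
vanishing on `(-∞, 0]` this is, at `t ≥ 0`, the Volterra convolution `∫₀ᵗ E(t-s) φ(s) ds`. -/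
def volterraConvolution (hE : Integrable E) : (ℝ →ᵇ V) →L[ℝ] (ℝ →ᵇ W) :=
  LinearMap.mkContinuous
    { toFun := fun φ => BoundedContinuousFunction.ofNormedAddCommGroup
        (fun t => ∫ s in Ioi 0, E (t - s) (φ s)) (continuous_setIntegral_convolution hE φ _)
        ((∫ r, ‖E r‖) * ‖φ‖) (norm_setIntegral_convolution_le hE φ _)
      map_add' := fun φ ψ => by
        ext t
        simp only [BoundedContinuousFunction.coe_ofNormedAddCommGroup,
          BoundedContinuousFunction.coe_add, Pi.add_apply, map_add]
        exact integral_add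
          (integrable_clm_apply_bcf (hE.comp_sub_left t) φ).restrict
          (integrable_clm_apply_bcf (hE.comp_sub_left t) ψ).restrict
      map_smul' := fun c φ => by
        ext t
        simp only [BoundedContinuousFunction.coe_ofNormedAddCommGroup,
          BoundedContinuousFunction.coe_smul, map_smul, RingHom.id_apply]
        exact integral_smul c _ }
    (∫ r, ‖E r‖) fun φ =>
      BoundedContinuousFunction.norm_ofNormedAddCommGroup_le _ (by positivity)
        (norm_setIntegral_convolution_le hE φ _)

lemma volterraConvolution_apply (hE : Integrable E) (φ : ℝ →ᵇ V) (t : ℝ) :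
    volterraConvolution hE φ t = ∫ s in Ioi 0, E (t - s) (φ s) :=
  rfl

lemma norm_volterraConvolution_le (hE : Integrable E) :
    ‖volterraConvolution hE‖ ≤ ∫ r, ‖E r‖ :=
  LinearMap.mkContinuous_norm_le _ (by positivity) _

lemma setIntegral_Ioi_indicator_kernel (φ : ℝ → V) {t T : ℝ} (ht : t ∈ Icc 0 T) :
    ∫ s in Ioi 0, (Ioc 0 T).indicator E (t - s) (φ s) = ∫ s in (0 : ℝ)..t, E (t - s) (φ s) := by
  have hind : (fun s => (Ioc 0 T).indicator E (t - s) (φ s)) =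
      (Ico (t - T) t).indicator fun s => E (t - s) (φ s) := by
    funext s
    have hiff : t - s ∈ Ioc 0 T ↔ s ∈ Ico (t - T) t := by
      rw [mem_Ioc, mem_Ico, sub_pos, sub_le_comm, and_comm]
    by_cases hs : s ∈ Ico (t - T) t
    · rw [indicator_of_mem hs, indicator_of_mem (hiff.2 hs)]
    · rw [indicator_of_notMem hs, indicator_of_notMem (mt hiff.1 hs), zero_apply]
  have hinter : Ioi 0 ∩ Ico (t - T) t = Ioo 0 t := by
    ext s
    simp only [mem_inter_iff, mem_Ioi, mem_Ico, mem_Ioo]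
    exact ⟨fun h => ⟨h.1, h.2.2⟩, fun h => ⟨h.1, by linarith [h.1, ht.2], h.2⟩⟩
  rw [hind, setIntegral_indicator measurableSet_Ico, hinter, ← integral_Ioc_eq_integral_Ioo,
    intervalIntegral.integral_of_le ht.1]

lemma exists_volterra_solution [CompleteSpace V] {E : ℝ → V →L[ℝ] V} {F : V → V} {L : NNReal}
    (hF : LipschitzWith L F) {T : ℝ} (hT : 0 ≤ T) (hE : IntervalIntegrable E volume 0 T)
    (hEL : (∫ r in (0 : ℝ)..T, ‖E r‖) * L ≤ 1 / 2) {g : ℝ → V} (hg : ContinuousOn g (Icc 0 T))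
    {M : ℝ} (hM : ∀ t ∈ Icc 0 T, ‖F (g t)‖ ≤ M) :
    ∃ y : ℝ → V, Continuous y ∧
      (∀ t ∈ Icc 0 T, y t = g t + ∫ s in (0 : ℝ)..t, E (t - s) (F (y s))) ∧
      ∀ t ∈ Icc 0 T, ‖y t - g t‖ ≤ 2 * ((∫ r in (0 : ℝ)..T, ‖E r‖) * M) := by
  have hE' : Integrable ((Ioc 0 T).indicator E) :=
    (integrable_indicator_iff measurableSet_Ioc).2
      ((intervalIntegrable_iff_integrableOn_Ioc_of_le hT).1 hE)
  have hnorm : ‖volterraConvolution hE'‖ ≤ ∫ r in (0 : ℝ)..T, ‖E r‖ := by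
    refine (norm_volterraConvolution_le hE').trans_eq ?_
    simp only [norm_indicator_eq_indicator_norm]
    rw [integral_indicator measurableSet_Ioc, intervalIntegral.integral_of_le hT]
  let g' : ℝ →ᵇ V := (BoundedContinuousFunction.mkOfCompact
    ⟨(Icc 0 T).domRestrict g, hg.domRestrict⟩).compContinuous ⟨projIcc 0 T hT, continuous_projIcc⟩
  have hg' : ∀ t ∈ Icc 0 T, g' t = g t := fun t ht =>
    congrArg g (congrArg Subtype.val (projIcc_of_mem hT ht))
  have hM' : ‖BoundedContinuousFunction.comp F hF g'‖ ≤ M :=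
    (BoundedContinuousFunction.norm_le ((norm_nonneg _).trans (hM 0 ⟨le_rfl, hT⟩))).2
      fun t => hM _ (projIcc 0 T hT t).2
  obtain ⟨y, hy, hyg⟩ := exists_eq_add_clm_apply (volterraConvolution hE')
    (BoundedContinuousFunction.lipschitz_comp hF)
    ((mul_le_mul_of_nonneg_right hnorm L.coe_nonneg).trans hEL) g'
  refine ⟨y, y.continuous, fun t ht => ?_, fun t ht => ?_⟩
  · rw [← hg' t ht, ← setIntegral_Ioi_indicator_kernel (fun s => F (y s)) ht]
    exact (DFunLike.congr_fun hy t).trans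
      (congrArg (g' t + ·) (volterraConvolution_apply hE' _ t))
  · rw [← hg' t ht]
    calc ‖y t - g' t‖ ≤ ‖y - g'‖ := (y - g').norm_coe_le_norm t
      _ ≤ _ := hyg
      _ ≤ _ := by
        gcongr
        exact (norm_nonneg _).trans hnorm

lemma intervalIntegrable_convolution {t : ℝ} (hE : IntervalIntegrable E volume 0 t) {φ : ℝ → V}
    (hφ : Continuous φ) : IntervalIntegrable (fun s => E (t - s) (φ s)) volume 0 t := by
  obtain ⟨C, hC⟩ := (isCompact_uIcc (a := 0) (b := t)).exists_bound_of_continuousOn hφ.continuousOn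
  have hreflect : IntervalIntegrable (fun s => E (t - s)) volume 0 t := by
    simpa only [sub_self, sub_zero] using (hE.comp_sub_left t).symm
  rw [intervalIntegrable_iff] at hreflect ⊢
  refine (ContinuousLinearMap.apply ℝ W).integrable_of_bilin_of_bdd_left C
    hφ.aestronglyMeasurable ?_ hreflect
  filter_upwards [ae_restrict_mem measurableSet_uIoc] with s hs
  exact hC s (uIoc_subset_uIcc hs)

end Convolution

section Controllability

open Set Filter Topology

variable {V : Type*} [NormedAddCommGroup V] [NormedSpace ℝ V] [CompleteSpace V]
  {S K : ℝ → V →L[ℝ] V}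

lemma integral_semigroup_feedback (hSS : ∀ s t, 0 ≤ s → 0 ≤ t → ∀ v, S s (S t v) = S (s + t) v)
    (hSK : ∀ s t, 0 ≤ s → 0 < t → ∀ v, S s (K t v) = K (s + t) v) {δ t : ℝ} (hδ : 0 < δ)
    (ht : 0 ≤ t) (w : V) {φ : ℝ → V}
    (hφ : IntervalIntegrable (fun s => K (t - s + δ) (φ s)) volume 0 t) :
    ∫ s in (0 : ℝ)..t, S (t - s) (S (max s 0) w - K δ (φ s)) =
      t • S t w - ∫ s in (0 : ℝ)..t, K (t - s + δ) (φ s) := by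
  have hcongr : EqOn (fun s => S (t - s) (S (max s 0) w - K δ (φ s)))
      (fun s => S t w - K (t - s + δ) (φ s)) (uIcc 0 t) := by
    intro s hs
    rw [uIcc_of_le ht] at hs
    have hts : 0 ≤ t - s := sub_nonneg.2 hs.2
    simp only [map_sub, max_eq_left hs.1, hSS _ _ hts hs.1, hSK _ _ hts hδ, sub_add_cancel]
  rw [intervalIntegral.integral_congr hcongr,
    intervalIntegral.integral_sub intervalIntegrable_const hφ, intervalIntegral.integral_const,
    sub_zero]

lemma mild_equation_of_feedback
    (hSS : ∀ s t, 0 ≤ s → 0 ≤ t → ∀ v, S s (S t v) = S (s + t) v)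
    (hSK : ∀ s t, 0 ≤ s → 0 < t → ∀ v, S s (K t v) = K (s + t) v)
    (hK : ∀ t, 0 ≤ t → IntervalIntegrable K volume 0 t) {δ t : ℝ} (hδ : 0 < δ) (ht : 0 ≤ t)
    (x w : V) {φ : ℝ → V} (hφ : Continuous φ) :
    S t x + t • S t w + ∫ s in (0 : ℝ)..t, (K (t - s) - K (t - s + δ)) (φ s) =
      S t x + (∫ s in (0 : ℝ)..t, K (t - s) (φ s)) +
        ∫ s in (0 : ℝ)..t, S (t - s) (S (max s 0) w - K δ (φ s)) := by
  have hint := intervalIntegrable_convolution (hK t ht) hφ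
  have hintδ := intervalIntegrable_convolution (intervalIntegrable_translate hK hδ.le ht) hφ
  simp only [sub_apply]
  rw [intervalIntegral.integral_sub hint hintδ, integral_semigroup_feedback hSS hSK hδ ht w hintδ]
  abel

/-- `K(t)` plays the role of `S(t)B` for an unbounded operator `B` that `S` smooths enough for `K`
to be integrable at `0`. -/
theorem stmt_13_general
    (hS : ∀ v, ContinuousOn (fun t => S t v) (Ici 0))
    (hSS : ∀ s t, 0 ≤ s → 0 ≤ t → ∀ v, S s (S t v) = S (s + t) v)
    (hSK : ∀ s t, 0 ≤ s → 0 < t → ∀ v, S s (K t v) = K (s + t) v)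
    (hK : ∀ t, 0 ≤ t → IntervalIntegrable K volume 0 t)
    {F : V → V} {L : NNReal} (hF : LipschitzWith L F) {ε T : ℝ} (hε : 0 < ε) (hT : 0 < T)
    (hdense : DenseRange (S T)) (x z : V) :
    ∃ u y : ℝ → V, Continuous u ∧ Continuous y ∧
      (∀ t ∈ Icc 0 T,
        y t = S t x + (∫ s in (0 : ℝ)..t, K (t - s) (F (y s))) +
          ∫ s in (0 : ℝ)..t, S (t - s) (u s)) ∧
      ‖y T - z‖ ≤ ε := by
  obtain ⟨p, hp⟩ : ∃ p, dist z (S T p) < ε / 2 := hdense.exists_dist_lt z (half_pos hε)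
  set w : V := T⁻¹ • (p - x)
  set g : ℝ → V := fun t => S t x + t • S t w
  have hgT : g T = S T p := by
    simp only [g, w, map_smul, smul_inv_smul₀ hT.ne', map_sub, add_sub_cancel]
  have hg : ContinuousOn g (Icc 0 T) :=
    ((hS x).add (continuousOn_id.smul (hS w))).mono Icc_subset_Ici_self
  obtain ⟨M, hM⟩ := isCompact_Icc.exists_bound_of_continuousOn (hF.continuous.comp_continuousOn hg)
  obtain ⟨δ, hδ, hδL, hδM⟩ := exists_pos_integral_norm_sub_translate_mul_le hT.le (lt_add_one T)
    (hK (T + 1) (by positivity)) L M one_half_pos (div_pos hε four_pos)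
  have hKδ : IntervalIntegrable (fun r => K r - K (r + δ)) volume 0 T :=
    (hK T hT.le).sub (intervalIntegrable_translate hK hδ.le hT.le)
  obtain ⟨y, hy, hyeq, hyg⟩ := exists_volterra_solution hF hT.le hKδ hδL hg hM
  refine ⟨fun s => S (max s 0) w - K δ (F (y s)), y, ?_, hy, fun t ht => ?_, ?_⟩
  · have hSmax : Continuous fun s => S (max s 0) w :=
      (hS w).comp_continuous (by fun_prop) fun s => le_max_right s 0
    exact hSmax.sub ((K δ).continuous.comp (hF.continuous.comp hy))
  · exact (hyeq t ht).trans
      (mild_equation_of_feedback hSS hSK hK hδ ht.1 x w (hF.continuous.comp hy))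
  · rw [dist_comm, dist_eq_norm, ← hgT] at hp
    linarith [norm_sub_le_norm_sub_add_norm_sub (y T) (g T) z, hyg T ⟨hT.le, le_rfl⟩]

end Controllability

section SequenceSpace

open Filter Topology

variable {ι ι' : Type*} {E : ι → Type*} {E' : ι' → Type*} [∀ i, NormedAddCommGroup (E i)]
  [∀ i, NormedAddCommGroup (E' i)] {p : ENNReal}

lemma lp_norm_le_mul_norm_of_injective (hp : 0 < p.toReal) {x : lp E p} {y : lp E' p}
    {σ : ι' → ι} (hσ : Function.Injective σ) {B : ℝ} (hB : 0 ≤ B)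
    (h : ∀ i, ‖y i‖ ≤ B * ‖x (σ i)‖) : ‖y‖ ≤ B * ‖x‖ := by
  classical
  refine lp.norm_le_of_forall_sum_le hp (mul_nonneg hB (lp.norm_nonneg' x)) fun s => ?_
  calc ∑ i ∈ s, ‖y i‖ ^ p.toReal ≤ ∑ i ∈ s, B ^ p.toReal * ‖x (σ i)‖ ^ p.toReal := by
        refine Finset.sum_le_sum fun i _ => ?_
        rw [← Real.mul_rpow hB (norm_nonneg _)]
        exact Real.rpow_le_rpow (norm_nonneg _) (h i) hp.le
    _ = B ^ p.toReal * ∑ j ∈ s.image σ, ‖x j‖ ^ p.toReal := by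
        rw [Finset.sum_image hσ.injOn, Finset.mul_sum]
    _ ≤ B ^ p.toReal * ‖x‖ ^ p.toReal := by
        gcongr
        exact lp.sum_rpow_le_norm_rpow hp x _
    _ = (B * ‖x‖) ^ p.toReal := (Real.mul_rpow hB (lp.norm_nonneg' x)).symm

lemma tendsto_lp_of_dominated [Fact (1 ≤ p)] (hp : p ≠ ⊤) {α : Type*} {l : Filter α}
    {f : α → lp E p} {x b : lp E p} (hf : ∀ i, Tendsto (fun a => f a i) l (𝓝 (x i)))
    (hb : ∀ᶠ a in l, ∀ i, ‖f a i‖ ≤ ‖b i‖) : Tendsto f l (𝓝 x) := by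
  rcases l.eq_or_neBot with rfl | _
  · exact tendsto_bot
  have hp' : 0 < p.toReal := ENNReal.toReal_pos (zero_lt_one.trans_le Fact.out).ne' hp
  have hxb : ∀ i, ‖x i‖ ≤ ‖b i‖ := fun i => le_of_tendsto (hf i).norm (hb.mono fun _ ha => ha i)
  have hpow : Tendsto (fun a => ‖f a - x‖ ^ p.toReal) l (𝓝 0) := by
    simp only [lp.norm_rpow_eq_tsum hp', lp.coeFn_sub, Pi.sub_apply]
    rw [← tsum_zero (α := ℝ) (β := ι)]
    refine tendsto_tsum_of_dominated_convergence
      (bound := fun i => 2 ^ p.toReal * ‖b i‖ ^ p.toReal)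
      (((lp.memℓp b).summable hp').mul_left _) (fun i => ?_) ?_
    · have hi : Tendsto (fun a => ‖f a i - x i‖) l (𝓝 0) :=
        tendsto_iff_norm_sub_tendsto_zero.1 (hf i)
      simpa only [Real.zero_rpow hp'.ne'] using hi.rpow_const (Or.inr hp'.le)
    · filter_upwards [hb] with a ha i
      have hsub : ‖f a i - x i‖ ≤ 2 * ‖b i‖ := by
        linarith [norm_sub_le (f a i) (x i), ha i, hxb i]
      rw [Real.norm_of_nonneg (by positivity), ← Real.mul_rpow zero_le_two (norm_nonneg _)]
      exact Real.rpow_le_rpow (norm_nonneg _) hsub hp'.le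
  have hroot := hpow.rpow_const (p := p.toReal⁻¹) (Or.inr (inv_nonneg.2 hp'.le))
  simp only [Real.rpow_rpow_inv (norm_nonneg _) hp'.ne',
    Real.zero_rpow (inv_ne_zero hp'.ne')] at hroot
  exact tendsto_iff_norm_sub_tendsto_zero.2 hroot

end SequenceSpace

section Heat

open Set Filter Topology

/-- `S(t) = e^{tA}` for `A = D² - I`, which is diagonal with eigenvalues `-(1 + k²)`. Nothing is
required at negative times. -/
def IsHeatSemigroup (S : ℝ → H →L[ℝ] H) : Prop :=
  ∀ t : ℝ, 0 ≤ t → ∀ (x : H) (k : ℤ), (S t x) k = Real.exp (-(1 + (k : ℝ) ^ 2) * t) * x k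

/-- `K(t) = D e^{tA}` for `A = D² - I`; the derivative `D` exchanges the modes `k` and `-k`. Nothing
is required at nonpositive times, where `D e^{tA}` is not bounded. -/
def IsHeatGradient (K : ℝ → H →L[ℝ] H) : Prop :=
  ∀ t : ℝ, 0 < t → ∀ (x : H) (k : ℤ),
    (K t x) k = -(k : ℝ) * Real.exp (-(1 + (k : ℝ) ^ 2) * t) * x (-k)

variable {S K : ℝ → H →L[ℝ] H}

namespace IsHeatSemigroup

lemma apply_apply (hS : IsHeatSemigroup S) {s t : ℝ} (hs : 0 ≤ s) (ht : 0 ≤ t) (x : H) :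
    S s (S t x) = S (s + t) x := by
  ext k
  rw [hS s hs, hS t ht, hS _ (add_nonneg hs ht), ← mul_assoc, ← Real.exp_add, ← mul_add]

lemma apply_heatGradient (hS : IsHeatSemigroup S) (hK : IsHeatGradient K) {s t : ℝ} (hs : 0 ≤ s)
    (ht : 0 < t) (x : H) : S s (K t x) = K (s + t) x := by
  ext k
  rw [hS s hs, hK t ht, hK _ (add_pos_of_nonneg_of_pos hs ht), mul_add, Real.exp_add]
  ring

lemma norm_coord_le (hS : IsHeatSemigroup S) {t : ℝ} (ht : 0 ≤ t) (x : H) (k : ℤ) :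
    ‖(S t x) k‖ ≤ ‖x k‖ := by
  rw [hS t ht, norm_mul, Real.norm_of_nonneg (Real.exp_nonneg _)]
  refine mul_le_of_le_one_left (norm_nonneg _) (Real.exp_le_one_iff.2 ?_)
  rw [neg_mul]
  exact neg_nonpos.2 (by positivity)

lemma continuousOn (hS : IsHeatSemigroup S) (x : H) : ContinuousOn (fun t => S t x) (Ici 0) := by
  intro t ht
  refine tendsto_lp_of_dominated (b := x) ENNReal.ofNat_ne_top (fun k => ?_) ?_
  · have hk : ContinuousOn (fun t => Real.exp (-(1 + (k : ℝ) ^ 2) * t) * x k) (Ici 0) := by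
      fun_prop
    exact hk.congr (fun s hs => hS s hs x k) t ht
  · filter_upwards [self_mem_nhdsWithin] with s hs
    exact hS.norm_coord_le hs x

lemma single_mem_range (hS : IsHeatSemigroup S) {t : ℝ} (ht : 0 ≤ t) (k : ℤ) (a : ℝ) :
    lp.single 2 k a ∈ (S t).range := by
  refine ⟨lp.single 2 k (Real.exp ((1 + (k : ℝ) ^ 2) * t) * a), ?_⟩
  ext j
  rcases eq_or_ne j k with rfl | hjk
  · rw [ContinuousLinearMap.coe_coe, hS t ht, lp.single_apply_self, lp.single_apply_self,
      ← mul_assoc, ← Real.exp_add, neg_mul, neg_add_cancel, Real.exp_zero, one_mul]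
  · rw [ContinuousLinearMap.coe_coe, hS t ht, lp.single_apply_ne _ _ _ hjk,
      lp.single_apply_ne _ _ _ hjk, mul_zero]

lemma denseRange (hS : IsHeatSemigroup S) {t : ℝ} (ht : 0 ≤ t) : DenseRange (S t) := fun z =>
  mem_closure_of_tendsto (lp.hasSum_single ENNReal.ofNat_ne_top z) <| Eventually.of_forall
    fun _ => Submodule.sum_mem (S t).range fun k _ => hS.single_mem_range ht k (z k)

end IsHeatSemigroup

lemma abs_mul_exp_neg_le {t : ℝ} (ht : 0 < t) (k : ℝ) :
    |k| * Real.exp (-(1 + k ^ 2) * t) ≤ t ^ (-(1 / 2) : ℝ) := by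
  have hexp : |k| * √t ≤ Real.exp ((1 + k ^ 2) * t) := by
    calc |k| * √t ≤ (|k| * √t) ^ 2 + 1 := by nlinarith [sq_nonneg (|k| * √t - 1)]
      _ = k ^ 2 * t + 1 := by rw [mul_pow, sq_abs, Real.sq_sqrt ht.le]
      _ ≤ Real.exp (k ^ 2 * t) := Real.add_one_le_exp _
      _ ≤ _ := Real.exp_le_exp.2 (by linarith)
  rw [Real.rpow_neg ht.le, ← Real.sqrt_eq_rpow, neg_mul, Real.exp_neg, ← div_eq_mul_inv,
    div_le_iff₀ (Real.exp_pos _), inv_mul_eq_div, le_div_iff₀ (Real.sqrt_pos.2 ht)]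
  exact hexp

lemma abs_mul_exp_sub_exp_le {s t : ℝ} (hs : 0 < s) (hst : s ≤ t) (k : ℝ) :
    |k| * |Real.exp (-(1 + k ^ 2) * s) - Real.exp (-(1 + k ^ 2) * t)| ≤ 2 / s ^ 2 * (t - s) := by
  set a := 1 + k ^ 2
  have ha : 0 < a := by positivity
  have hka : |k| ≤ a := by nlinarith [sq_nonneg (|k| - 1), sq_abs k]
  have hincr : |Real.exp (-a * s) - Real.exp (-a * t)| ≤ Real.exp (-a * s) * (a * (t - s)) := by
    have hfactor : Real.exp (-a * t) = Real.exp (-a * s) * Real.exp (-(a * (t - s))) := by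
      rw [← Real.exp_add]; ring_nf
    have hdecr : Real.exp (-a * t) ≤ Real.exp (-a * s) := Real.exp_le_exp.2 (by nlinarith)
    rw [abs_of_nonneg (sub_nonneg.2 hdecr), hfactor, ← mul_one_sub]
    gcongr
    linarith [Real.one_sub_le_exp_neg (a * (t - s))]
  have hquad : a ^ 2 * Real.exp (-a * s) ≤ 2 / s ^ 2 := by
    rw [neg_mul, Real.exp_neg, ← div_eq_mul_inv, div_le_div_iff₀ (Real.exp_pos _) (by positivity)]
    nlinarith [Real.quadratic_le_exp_of_nonneg (mul_pos ha hs).le, mul_pos ha hs]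
  calc _ ≤ a * (Real.exp (-a * s) * (a * (t - s))) := by gcongr
    _ = a ^ 2 * Real.exp (-a * s) * (t - s) := by ring
    _ ≤ _ := mul_le_mul_of_nonneg_right hquad (sub_nonneg.2 hst)

namespace IsHeatGradient

lemma norm_le (hK : IsHeatGradient K) {t : ℝ} (ht : 0 < t) : ‖K t‖ ≤ t ^ (-(1 / 2) : ℝ) := by
  refine (K t).opNorm_le_bound (by positivity) fun x =>
    lp_norm_le_mul_norm_of_injective (by norm_num) neg_injective (by positivity) fun k => ?_
  rw [hK t ht, norm_mul, norm_mul, norm_neg, Real.norm_of_nonneg (Real.exp_nonneg _)]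
  exact mul_le_mul_of_nonneg_right (abs_mul_exp_neg_le ht k) (norm_nonneg _)

lemma norm_sub_le (hK : IsHeatGradient K) {s t : ℝ} (hs : 0 < s) (hst : s ≤ t) :
    ‖K s - K t‖ ≤ 2 / s ^ 2 * (t - s) := by
  have hnonneg : 0 ≤ 2 / s ^ 2 * (t - s) := mul_nonneg (by positivity) (sub_nonneg.2 hst)
  refine (K s - K t).opNorm_le_bound hnonneg fun x =>
    lp_norm_le_mul_norm_of_injective (by norm_num) neg_injective hnonneg fun k => ?_
  rw [sub_apply, lp.coeFn_sub, Pi.sub_apply, hK s hs, hK t (hs.trans_le hst), ← sub_mul, ← mul_sub,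
    norm_mul, norm_mul, norm_neg]
  exact mul_le_mul_of_nonneg_right (abs_mul_exp_sub_exp_le hs hst k) (norm_nonneg _)

lemma lipschitzOnWith (hK : IsHeatGradient K) {c : ℝ} (hc : 0 < c) :
    LipschitzOnWith (2 / c ^ 2).toNNReal K (Ici c) := by
  refine LipschitzOnWith.of_dist_le_mul fun s hs t ht => ?_
  wlog hst : s ≤ t generalizing s t
  · rw [dist_comm, dist_comm s]
    exact this t ht s hs (le_of_not_ge hst)
  rw [Real.coe_toNNReal _ (by positivity), dist_eq_norm, dist_comm s, Real.dist_eq,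
    abs_of_nonneg (sub_nonneg.2 hst)]
  refine (hK.norm_sub_le (hc.trans_le hs) hst).trans ?_
  have hcs : c ≤ s := hs
  have : 0 ≤ t - s := sub_nonneg.2 hst
  gcongr

lemma continuousOn (hK : IsHeatGradient K) : ContinuousOn K (Ioi 0) := fun _ ht =>
  ((hK.lipschitzOnWith (half_pos ht)).continuousOn.continuousAt
    (Ici_mem_nhds (half_lt_self ht))).continuousWithinAt

lemma intervalIntegrable (hK : IsHeatGradient K) {t : ℝ} (ht : 0 ≤ t) :
    IntervalIntegrable K volume 0 t := by
  have hrpow : IntervalIntegrable (fun r : ℝ => r ^ (-(1 / 2) : ℝ)) volume 0 t :=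
    intervalIntegral.intervalIntegrable_rpow' (by norm_num)
  rw [intervalIntegrable_iff_integrableOn_Ioc_of_le ht] at hrpow ⊢
  refine hrpow.mono' ((hK.continuousOn.mono Ioc_subset_Ioi_self).aestronglyMeasurable
    measurableSet_Ioc) ?_
  filter_upwards [ae_restrict_mem measurableSet_Ioc] with r hr
  exact hK.norm_le hr.1

end IsHeatGradient

end Heat

/-- Approximate controllability of the control system
`y(t) = S(t)x + ∫₀ᵗ K(t−s)F(y(s))ds + ∫₀ᵗ S(t−s)u(s)ds`: for every `ε > 0`, `T > 0` and
`x, z ∈ H` there exist a strongly measurable, square-integrable control `u : [0,T] → H`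
and a continuous solution `y : [0,T] → H` with `‖y(T) − z‖ ≤ ε`. -/
theorem stmt_13 (S K : ℝ → H →L[ℝ] H)
    (hS : ∀ t : ℝ, 0 ≤ t → ∀ (x : H) (k : ℤ),
      (S t x) k = Real.exp (-(1 + (k : ℝ) ^ 2) * t) * x k)
    (hK : ∀ t : ℝ, 0 < t → ∀ (x : H) (k : ℤ),
      (K t x) k = -(k : ℝ) * Real.exp (-(1 + (k : ℝ) ^ 2) * t) * x (-k))
    (F : H → H) (hF : ∃ L : NNReal, LipschitzWith L F)
    (ε T : ℝ) (hε : 0 < ε) (hT : 0 < T) (x z : H) :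
    ∃ (u : ℝ → H) (y : ℝ → H),
      MeasureTheory.StronglyMeasurable u ∧
      IntervalIntegrable (fun t => ‖u t‖ ^ 2) MeasureTheory.volume 0 T ∧
      ContinuousOn y (Set.Icc 0 T) ∧
      (∀ t ∈ Set.Icc (0 : ℝ) T,
        y t = S t x + (∫ s in (0 : ℝ)..t, K (t - s) (F (y s))) +
          ∫ s in (0 : ℝ)..t, S (t - s) (u s)) ∧
      ‖y T - z‖ ≤ ε := by
  have hS : IsHeatSemigroup S := hS
  have hK : IsHeatGradient K := hK
  obtain ⟨L, hL⟩ := hF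
  obtain ⟨u, y, hu, hy, hmild, hyT⟩ := stmt_13_general hS.continuousOn
    (fun _ _ hs ht => hS.apply_apply hs ht) (fun _ _ hs ht => hS.apply_heatGradient hK hs ht)
    (fun _ ht => hK.intervalIntegrable ht) hL hε hT (hS.denseRange hT.le) x z
  exact ⟨u, y, hu.stronglyMeasurable, (hu.norm.pow 2).intervalIntegrable _ _, hy.continuousOn,
    hmild, hyT⟩
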